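/- arXiv:cs/0510029 — 3 statements merged into one kernel-verified Lean document; each statement's English description precedes it below -/
import Mathlib

section
/- If the joint probability matrix of a pair of random variables α, β on a finite probability space is a block matrix, then α and β are not conditionally independent of any order k. -/
open scoped BigOperators Classical

noncomputable section

/-- Probability of an event `E` under a distribution `μ` on a finite sample space `Ω`. -/
def pr {Ω : Type} [Fintype Ω] (μ : Ω → ℝ) (E : Ω → Prop) : ℝ :=
  ∑ ω, if E ω then μ ω else 0

/-- `μ` is a probability distribution on the finite space `Ω`. -/
def IsProb {Ω : Type} [Fintype Ω] (μ : Ω → ℝ) : Prop :=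
  (∀ ω, 0 ≤ μ ω) ∧ ∑ ω, μ ω = 1

/-- Shannon entropy (base 2) of a random variable `α` on a finite probability space. -/
def ent {Ω A : Type} [Fintype Ω] (μ : Ω → ℝ) (α : Ω → A) : ℝ :=
  -∑ a ∈ Finset.univ.image α,
      pr μ (fun ω => α ω = a) * Real.logb 2 (pr μ (fun ω => α ω = a))

/-- Conditional entropy `H(α | β)`. -/
def condEnt {Ω A B : Type} [Fintype Ω] (μ : Ω → ℝ) (α : Ω → A) (β : Ω → B) : ℝ :=
  ent μ (fun ω => (α ω, β ω)) - ent μ β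

/-- Mutual information `I(α : β)`. -/
def mutualInfo {Ω A B : Type} [Fintype Ω] (μ : Ω → ℝ) (α : Ω → A) (β : Ω → B) : ℝ :=
  ent μ α + ent μ β - ent μ (fun ω => (α ω, β ω))

/-- Conditional mutual information `I(α : β | γ)`. -/
def condMutualInfo {Ω A B C : Type} [Fintype Ω] (μ : Ω → ℝ)
    (α : Ω → A) (β : Ω → B) (γ : Ω → C) : ℝ :=
  condEnt μ α γ + condEnt μ β γ - condEnt μ (fun ω => (α ω, β ω)) γ

/-- Independence of two random variables. -/
def Indep {Ω A B : Type} [Fintype Ω] (μ : Ω → ℝ) (α : Ω → A) (β : Ω → B) : Prop :=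
  ∀ (a : A) (b : B),
    pr μ (fun ω => α ω = a ∧ β ω = b) =
      pr μ (fun ω => α ω = a) * pr μ (fun ω => β ω = b)

/-- Auxiliary form of "conditionally independent of order `k`" (explicit `Fintype`):
`α` and `β` are conditionally independent of order `0` if they are independent,
and of order `k + 1` if on some finite probability space there are random variables
`α₀, β₀, α*, β*` such that `(α₀, β₀)` has the same joint distribution as `(α, β)`,
`I(α₀ : β₀ | α*) = 0`, `I(α₀ : β₀ | β*) = 0`, and `α*, β*` are conditionally
independent of order `k`. -/
def CondIndepOrderAux : ℕ → (Ω A B : Type) → Fintype Ω → (Ω → ℝ) → (Ω → A) → (Ω → B) → Prop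
  | 0, _Ω, _A, _B, iΩ, μ, α, β => @Indep _ _ _ iΩ μ α β
  | k+1, _Ω, A, B, iΩ, μ, α, β =>
      ∃ (Ω' A' B' : Type) (iΩ' : Fintype Ω') (μ' : Ω' → ℝ)
        (α₀ : Ω' → A) (β₀ : Ω' → B) (αs : Ω' → A') (βs : Ω' → B'),
        @IsProb _ iΩ' μ' ∧
        (∀ (a : A) (b : B),
          @pr _ iΩ' μ' (fun ω => α₀ ω = a ∧ β₀ ω = b) =
            @pr _ iΩ μ (fun ω => α ω = a ∧ β ω = b)) ∧
        @condMutualInfo _ _ _ _ iΩ' μ' α₀ β₀ αs = 0 ∧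
        @condMutualInfo _ _ _ _ iΩ' μ' α₀ β₀ βs = 0 ∧
        CondIndepOrderAux k Ω' A' B' iΩ' μ' αs βs

/-- Random variables `α` and `β` on a finite probability space are
conditionally independent of order `k`. -/
def CondIndepOrder {Ω A B : Type} [iΩ : Fintype Ω]
    (μ : Ω → ℝ) (α : Ω → A) (β : Ω → B) (k : ℕ) : Prop :=
  CondIndepOrderAux k Ω A B iΩ μ α β

/-- An `m × n` joint probability matrix: nonnegative entries summing to `1`. -/
def IsJointProbMatrix {m n : ℕ} (M : Matrix (Fin m) (Fin n) ℝ) : Prop :=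
  (∀ i j, 0 ≤ M i j) ∧ ∑ i, ∑ j, M i j = 1

/-- `M` is the joint probability matrix of the pair `(α, β)`. -/
def IsJointMatrixOf {Ω : Type} [Fintype Ω] {m n : ℕ} (M : Matrix (Fin m) (Fin n) ℝ)
    (μ : Ω → ℝ) (α : Ω → Fin m) (β : Ω → Fin n) : Prop :=
  ∀ i j, M i j = pr μ (fun ω => α ω = i ∧ β ω = j)

/-- `M` is a block matrix: rows and columns can be partitioned into two nonempty
parts so that the two diagonal blocks each contain a nonzero element and all
entries outside the diagonal blocks vanish. -/
def IsBlockMatrix {m n : ℕ} (M : Matrix (Fin m) (Fin n) ℝ) : Prop :=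
  ∃ (I₁ : Finset (Fin m)) (J₁ : Finset (Fin n)),
    I₁.Nonempty ∧ I₁ᶜ.Nonempty ∧ J₁.Nonempty ∧ J₁ᶜ.Nonempty ∧
    (∃ i ∈ I₁, ∃ j ∈ J₁, M i j ≠ 0) ∧
    (∃ i ∈ I₁ᶜ, ∃ j ∈ J₁ᶜ, M i j ≠ 0) ∧
    (∀ i j, ((i ∈ I₁ ∧ j ∈ J₁ᶜ) ∨ (i ∈ I₁ᶜ ∧ j ∈ J₁)) → M i j = 0)

/-- `M` is a good matrix: the joint probability matrix of some pair of
conditionally independent random variables (of some finite order). -/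
def IsGoodMatrix {m n : ℕ} (M : Matrix (Fin m) (Fin n) ℝ) : Prop :=
  ∃ (Ω : Type) (iΩ : Fintype Ω) (μ : Ω → ℝ) (α : Ω → Fin m) (β : Ω → Fin n) (k : ℕ),
    @IsProb _ iΩ μ ∧ @IsJointMatrixOf _ iΩ _ _ M μ α β ∧
    @CondIndepOrder _ _ _ iΩ μ α β k

/-- A stochastic matrix: nonnegative entries, all row sums equal to `1`. -/
def IsStochastic {m n : ℕ} (A : Matrix (Fin m) (Fin n) ℝ) : Prop :=
  (∀ i j, 0 ≤ A i j) ∧ ∀ i, ∑ j, A i j = 1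

/-- The matrix `D_ε`: diagonal entries `1/2 - ε`, off-diagonal entries `ε`. -/
def Dmat (ε : ℝ) : Matrix (Fin 2) (Fin 2) ℝ :=
  fun i j => if i = j then 1/2 - ε else ε

/-- The distribution of `n` i.i.d. trials, each distributed according to `μ`. -/
def iidMeasure {Ω : Type} [Fintype Ω] (μ : Ω → ℝ) (n : ℕ) : (Fin n → Ω) → ℝ :=
  fun ωv => ∏ i, μ (ωv i)

/-- The sequence of `n` coordinatewise copies of a random variable. -/
def iidRV {Ω A : Type} (α : Ω → A) (n : ℕ) : (Fin n → Ω) → (Fin n → A) :=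
  fun ωv i => α (ωv i)

/-- `(u, v, w)` belongs to the rate region of the pair `(α, β)`. -/
def InRateRegion {Ω A B : Type} [Fintype Ω] (μ : Ω → ℝ) (α : Ω → A) (β : Ω → B)
    (u v w : ℝ) : Prop :=
  0 ≤ u ∧ 0 ≤ v ∧ 0 ≤ w ∧
  ∀ ε > (0:ℝ), ∀ δ > (0:ℝ), ∃ n₀ : ℕ, ∀ n ≥ n₀,
    ∃ (t : (Fin n → A) × (Fin n → B) → (Fin ⌊(u + δ) * n⌋₊ → Bool))
      (f : (Fin n → A) × (Fin n → B) → (Fin ⌊(v + δ) * n⌋₊ → Bool))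
      (g : (Fin n → A) × (Fin n → B) → (Fin ⌊(w + δ) * n⌋₊ → Bool))
      (r : (Fin ⌊(u + δ) * n⌋₊ → Bool) × (Fin ⌊(v + δ) * n⌋₊ → Bool) → (Fin n → A))
      (s : (Fin ⌊(u + δ) * n⌋₊ → Bool) × (Fin ⌊(w + δ) * n⌋₊ → Bool) → (Fin n → B)),
      pr (iidMeasure μ n) (fun ωv =>
          r (t (iidRV α n ωv, iidRV β n ωv), f (iidRV α n ωv, iidRV β n ωv)) = iidRV α n ωv)
        > 1 - ε ∧
      pr (iidMeasure μ n) (fun ωv =>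
          s (t (iidRV α n ωv, iidRV β n ωv), g (iidRV α n ωv, iidRV β n ωv)) = iidRV β n ωv)
        > 1 - ε

/-- The support of a matrix: the set of positions of its nonzero entries. -/
def msupport {m n : ℕ} (M : Matrix (Fin m) (Fin n) ℝ) : Set (Fin m × Fin n) :=
  {p | M p.1 p.2 ≠ 0}

/-- An r-matrix: nonnegative entries and rectangular support. -/
def IsRMatrix {m n : ℕ} (M : Matrix (Fin m) (Fin n) ℝ) : Prop :=
  (∀ i j, 0 ≤ M i j) ∧ ∃ (A : Set (Fin m)) (B : Set (Fin n)), msupport M = A ×ˢ B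

/-- An r-decomposition of `M`: an expression of `M` as a finite sum of r-matrices
such that the supports of consecutive summands intersect. -/
def IsRDecomposition {m n : ℕ} (M : Matrix (Fin m) (Fin n) ℝ)
    (l : ℕ) (Ms : Fin l → Matrix (Fin m) (Fin n) ℝ) : Prop :=
  M = ∑ i, Ms i ∧ (∀ i, IsRMatrix (Ms i)) ∧
  ∀ (i : ℕ) (h : i + 1 < l),
    (msupport (Ms ⟨i, Nat.lt_of_succ_lt h⟩) ∩ msupport (Ms ⟨i + 1, h⟩)).Nonempty

end

lemma ent_eq_aux {Ω A : Type} [Fintype Ω] (μ : Ω → ℝ) (X : Ω → A) :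
    ent μ X = -∑ ω, μ ω * Real.logb 2 (pr μ (fun ω' => X ω' = X ω)) := by
  unfold ent
  congr 1
  rw [← Finset.sum_fiberwise_of_maps_to (s := Finset.univ) (t := Finset.univ.image X) (g := X)
    (fun x _ => Finset.mem_image_of_mem X (Finset.mem_univ x))]
  refine Finset.sum_congr rfl fun a _ => ?_
  have h1 : ∀ L : ℝ, pr μ (fun ω => X ω = a) * L
      = ∑ ω ∈ Finset.univ.filter (fun ω => X ω = a), μ ω * L := by
    intro L
    unfold pr
    rw [← Finset.sum_filter, Finset.sum_mul]
  rw [h1]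
  refine Finset.sum_congr rfl fun ω hω => ?_
  rw [(Finset.mem_filter.1 hω).2]

lemma pr_nonneg_aux {Ω : Type} [Fintype Ω] {μ : Ω → ℝ} (hμ : IsProb μ) (E : Ω → Prop) :
    0 ≤ pr μ E := by
  unfold pr
  refine Finset.sum_nonneg fun ω _ => ?_
  split_ifs
  · exact hμ.1 ω
  · exact le_rfl

lemma pr_pos_aux {Ω : Type} [Fintype Ω] {μ : Ω → ℝ} (hμ : IsProb μ) (E : Ω → Prop)
    (ω : Ω) (h : 0 < μ ω) (hE : E ω) : 0 < pr μ E := by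
  unfold pr
  refine Finset.sum_pos' (fun ω _ => ?_) ⟨ω, Finset.mem_univ _, ?_⟩
  · split_ifs
    · exact hμ.1 ω
    · exact le_rfl
  · simpa [hE] using h

lemma exists_of_pr_ne_aux {Ω : Type} [Fintype Ω] {μ : Ω → ℝ} (hμ : IsProb μ) (E : Ω → Prop)
    (h : pr μ E ≠ 0) : ∃ ω, 0 < μ ω ∧ E ω := by
  unfold pr at h
  obtain ⟨ω, -, hω⟩ := Finset.exists_ne_zero_of_sum_ne_zero h
  by_cases hE : E ω
  · simp only [hE, if_true] at hω
    exact ⟨ω, lt_of_le_of_ne (hμ.1 ω) (Ne.symm hω), hE⟩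
  · simp [hE] at hω

lemma pr_congr_aux {Ω : Type} [Fintype Ω] (μ : Ω → ℝ) {E F : Ω → Prop} (h : ∀ ω, E ω ↔ F ω) :
    pr μ E = pr μ F := by
  have : E = F := funext fun ω => propext (h ω)
  rw [this]

/-- Support consequence of vanishing conditional mutual information. -/
lemma support_of_condMutualInfo {Ω A B C : Type} [Fintype Ω] {μ : Ω → ℝ} (hμ : IsProb μ)
    (α : Ω → A) (β : Ω → B) (γ : Ω → C) (h : condMutualInfo μ α β γ = 0)
    (u v : Ω) (hu : 0 < μ u) (hv : 0 < μ v) (huv : γ u = γ v) :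
    ∃ ω, 0 < μ ω ∧ α ω = α u ∧ β ω = β v := by
  by_contra hcon
  push Not at hcon
  set pac : Ω → ℝ := fun ω => pr μ (fun x => (α x, γ x) = (α ω, γ ω)) with hpac
  set pbc : Ω → ℝ := fun ω => pr μ (fun x => (β x, γ x) = (β ω, γ ω)) with hpbc
  set pabc : Ω → ℝ := fun ω => pr μ (fun x => ((α x, β x), γ x) = ((α ω, β ω), γ ω)) with hpabc
  set pc : Ω → ℝ := fun ω => pr μ (fun x => γ x = γ ω) with hpc
  have pos : ∀ ω, 0 < μ ω → 0 < pac ω ∧ 0 < pbc ω ∧ 0 < pabc ω ∧ 0 < pc ω := fun ω hω =>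
    ⟨pr_pos_aux hμ _ ω hω rfl, pr_pos_aux hμ _ ω hω rfl, pr_pos_aux hμ _ ω hω rfl,
      pr_pos_aux hμ _ ω hω rfl⟩
  have hsum : ∑ ω, μ ω * Real.log (pac ω * pbc ω / (pabc ω * pc ω)) = 0 := by
    have h2 : ∑ ω, (μ ω * Real.logb 2 (pac ω) + μ ω * Real.logb 2 (pbc ω)
        - μ ω * Real.logb 2 (pabc ω) - μ ω * Real.logb 2 (pc ω)) = 0 := by
      rw [Finset.sum_sub_distrib, Finset.sum_sub_distrib, Finset.sum_add_distrib]
      unfold condMutualInfo condEnt at h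
      simp only [ent_eq_aux] at h
      linarith
    have h3 : ∀ ω, μ ω * Real.log (pac ω * pbc ω / (pabc ω * pc ω)) =
        (μ ω * Real.logb 2 (pac ω) + μ ω * Real.logb 2 (pbc ω)
        - μ ω * Real.logb 2 (pabc ω) - μ ω * Real.logb 2 (pc ω)) * Real.log 2 := by
      intro ω
      rcases (hμ.1 ω).eq_or_lt with h0 | h0
      · simp [← h0]
      · obtain ⟨h1, h2, h3, h4⟩ := pos ω h0
        have hl : Real.log 2 ≠ 0 := (Real.log_pos (by norm_num)).ne'
        rw [Real.log_div (by positivity) (by positivity), Real.log_mul h1.ne' h2.ne',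
          Real.log_mul h3.ne' h4.ne']
        unfold Real.logb
        field_simp
        ring
    simp only [h3]
    rw [← Finset.sum_mul, h2, zero_mul]
  have hge : 1 ≤ ∑ ω, μ ω * (pac ω * pbc ω / (pabc ω * pc ω)) := by
    have : ∑ ω, μ ω * Real.log (pac ω * pbc ω / (pabc ω * pc ω)) ≤
        ∑ ω, (μ ω * (pac ω * pbc ω / (pabc ω * pc ω)) - μ ω) := by
      refine Finset.sum_le_sum fun ω _ => ?_
      rcases (hμ.1 ω).eq_or_lt with h0 | h0
      · simp [← h0]
      · obtain ⟨h1, h2, h3, h4⟩ := pos ω h0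
        have := Real.log_le_sub_one_of_pos
          (show 0 < pac ω * pbc ω / (pabc ω * pc ω) by positivity)
        nlinarith
    rw [hsum, Finset.sum_sub_distrib, hμ.2] at this
    linarith
  -- the weights on pairs
  set w : Ω → Ω → ℝ := fun x y => if γ y = γ x then μ x * μ y / pc x else 0 with hw
  set s : Ω → Ω → ℝ := fun x y =>
    ∑ ω, if α x = α ω ∧ β y = β ω ∧ γ x = γ ω then μ ω / pabc ω else 0 with hs
  have hw0 : ∀ x y, 0 ≤ w x y := by
    intro x y
    simp only [hw]
    split_ifs
    · exact div_nonneg (mul_nonneg (hμ.1 x) (hμ.1 y)) (pr_nonneg_aux hμ _)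
    · exact le_rfl
  have hwtot : ∑ x, ∑ y, w x y = 1 := by
    rw [← hμ.2]
    refine Finset.sum_congr rfl fun x _ => ?_
    have : ∑ y, w x y = μ x / pc x * pc x := by
      have e : pc x = ∑ y, if γ y = γ x then μ y else 0 := rfl
      conv_rhs => enter [2]; rw [e]
      rw [Finset.mul_sum]
      refine Finset.sum_congr rfl fun y _ => ?_
      simp only [hw]
      split_ifs
      · ring
      · simp
    rw [this]
    rcases (hμ.1 x).eq_or_lt with h0 | h0
    · simp [← h0]
    · exact div_mul_cancel₀ _ (pos x h0).2.2.2.ne'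
  have hs1 : ∀ x y, s x y ≤ 1 := by
    intro x y
    have : s x y = pr μ (fun ω => ((α ω, β ω), γ ω) = ((α x, β y), γ x)) *
        (pr μ (fun ω => ((α ω, β ω), γ ω) = ((α x, β y), γ x)))⁻¹ := by
      conv_rhs => enter [1]; unfold pr
      rw [Finset.sum_mul]
      refine Finset.sum_congr rfl fun ω _ => ?_
      by_cases hc : α x = α ω ∧ β y = β ω ∧ γ x = γ ω
      · obtain ⟨e1, e2, e3⟩ := hc
        simp [e1, e2, e3, hpabc, div_eq_mul_inv]
      · have : ¬ (((α ω, β ω), γ ω) = ((α x, β y), γ x)) := by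
          rintro e
          simp only [Prod.mk.injEq] at e
          exact hc ⟨e.1.1.symm, e.1.2.symm, e.2.symm⟩
        simp only [hc, this, if_false, zero_mul]
    rw [this]
    exact mul_inv_le_one
  have hs2 : s u v = 0 := by
    refine Finset.sum_eq_zero fun ω _ => ?_
    split_ifs with hc
    · rcases (hμ.1 ω).eq_or_lt with h0 | h0
      · simp [← h0]
      · exact absurd hc.2.1.symm (hcon ω h0 hc.1.symm)
    · rfl
  have heq : ∑ ω, μ ω * (pac ω * pbc ω / (pabc ω * pc ω)) = ∑ x, ∑ y, w x y * s x y := by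
    have e1 : ∀ ω, μ ω * (pac ω * pbc ω / (pabc ω * pc ω)) =
        ∑ x, ∑ y, w x y * (if α x = α ω ∧ β y = β ω ∧ γ x = γ ω then μ ω / pabc ω else 0) := by
      intro ω
      have : μ ω * (pac ω * pbc ω / (pabc ω * pc ω)) =
        (pac ω * pbc ω) * (μ ω / (pabc ω * pc ω)) := by ring
      rw [this]
      conv_lhs => rw [hpac, hpbc]
      simp only [pr]
      rw [Finset.sum_mul_sum, Finset.sum_mul]
      refine Finset.sum_congr rfl fun x _ => ?_
      rw [Finset.sum_mul]
      refine Finset.sum_congr rfl fun y _ => ?_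
      simp only [hw, Prod.mk.injEq]
      by_cases c1 : α x = α ω
      · by_cases c2 : γ x = γ ω
        · have e : pc x = pc ω := by simp only [hpc, c2]
          by_cases c3 : β y = β ω
          · by_cases c4 : γ y = γ ω
            · simp only [c1, c2, c3, c4, e, and_self, if_true]
              simp only [div_eq_mul_inv, mul_inv]
              ring
            · simp [c1, c2, c3, c4]
          · simp [c3]
        · simp [c2]
      · simp [c1]
    simp only [e1]
    rw [Finset.sum_comm]
    refine Finset.sum_congr rfl fun x _ => ?_
    rw [Finset.sum_comm]
    refine Finset.sum_congr rfl fun y _ => ?_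
    rw [hs, Finset.mul_sum]
  have hlt : ∑ x, ∑ y, w x y * s x y < ∑ x, ∑ y, w x y := by
    have hle : ∀ x y, w x y * s x y ≤ w x y := fun x y =>
      mul_le_of_le_one_right (hw0 x y) (hs1 x y)
    refine Finset.sum_lt_sum (fun x _ => Finset.sum_le_sum fun y _ => hle x y)
      ⟨u, Finset.mem_univ _, Finset.sum_lt_sum (fun y _ => hle u y) ⟨v, Finset.mem_univ _, ?_⟩⟩
    rw [hs2, mul_zero]
    simp only [hw, huv, if_true]
    have := (pos u hu).2.2.2
    positivity
  linarith

/-- Main induction: a common nontrivial bit excludes conditional independence of any order. -/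
lemma not_aux (k : ℕ) : ∀ (Ω A B : Type) (iΩ : Fintype Ω) (μ : Ω → ℝ) (α : Ω → A) (β : Ω → B)
    (P : A → Prop) (Q : B → Prop), IsProb μ →
    (∀ ω, 0 < μ ω → (P (α ω) ↔ Q (β ω))) →
    (∃ ω, 0 < μ ω ∧ P (α ω)) → (∃ ω, 0 < μ ω ∧ ¬ P (α ω)) →
    ¬ CondIndepOrderAux k Ω A B iΩ μ α β := by
  induction k with
  | zero =>
    intro Ω A B iΩ μ α β P Q hμ hPQ ⟨u, hu, hPu⟩ ⟨v, hv, hPv⟩ h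
    have h1 : pr μ (fun ω => α ω = α u ∧ β ω = β v) ≠ 0 := by
      have h2 : pr μ (fun ω => α ω = α u ∧ β ω = β v) = _ := h (α u) (β v)
      rw [h2]
      exact (mul_pos (pr_pos_aux hμ (fun ω => α ω = α u) u hu rfl)
        (pr_pos_aux hμ (fun ω => β ω = β v) v hv rfl)).ne'
    obtain ⟨ω, hω, e1, e2⟩ := exists_of_pr_ne_aux hμ _ h1
    have := hPQ ω hω
    rw [e1, e2, ← hPQ v hv] at this
    exact hPv (this.1 hPu)
  | succ k ih =>
    intro Ω A B iΩ μ α β P Q hμ hPQ ⟨u, hu, hPu⟩ ⟨v, hv, hPv⟩ h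
    obtain ⟨Ω', A', B', iΩ', μ', α₀, β₀, αs, βs, hμ', hd, hI, hJ, hk⟩ := h
    have tr : ∀ ω, 0 < μ ω → ∃ x, 0 < μ' x ∧ α₀ x = α ω ∧ β₀ x = β ω := by
      intro ω hω
      refine exists_of_pr_ne_aux hμ' _ ?_
      rw [hd]
      exact (pr_pos_aux hμ _ ω hω ⟨rfl, rfl⟩).ne'
    have hPQ' : ∀ x, 0 < μ' x → (P (α₀ x) ↔ Q (β₀ x)) := by
      intro x hx
      obtain ⟨ω, hω, e1, e2⟩ := exists_of_pr_ne_aux hμ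
        (fun ω => α ω = α₀ x ∧ β ω = β₀ x) (by
          rw [← hd]
          exact (pr_pos_aux hμ' _ x hx ⟨rfl, rfl⟩).ne')
      rw [← e1, ← e2]
      exact hPQ ω hω
    have key : ∀ (C : Type) (γ : Ω' → C), condMutualInfo μ' α₀ β₀ γ = 0 →
        ∀ x, 0 < μ' x → ((∃ y, 0 < μ' y ∧ γ y = γ x ∧ P (α₀ y)) ↔ P (α₀ x)) := by
      intro C γ hγ x hx
      constructor
      · rintro ⟨y, hy, e, hP⟩
        obtain ⟨z, hz, e1, e2⟩ := support_of_condMutualInfo hμ' α₀ β₀ γ hγ y x hy hx e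
        have := hPQ' z hz
        rw [e1, e2, ← hPQ' x hx] at this
        exact this.1 hP
      · intro hP
        exact ⟨x, hx, rfl, hP⟩
    refine ih Ω' A' B' iΩ' μ' αs βs (fun c => ∃ y, 0 < μ' y ∧ αs y = c ∧ P (α₀ y))
      (fun c => ∃ y, 0 < μ' y ∧ βs y = c ∧ P (α₀ y)) hμ' ?_ ?_ ?_ hk
    · intro x hx
      exact (key _ αs hI x hx).trans (key _ βs hJ x hx).symm
    · obtain ⟨x, hx, e, -⟩ := tr u hu
      exact ⟨x, hx, (key _ αs hI x hx).2 (e ▸ hPu)⟩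
    · obtain ⟨x, hx, e, -⟩ := tr v hv
      exact ⟨x, hx, fun hh => hPv (e ▸ (key _ αs hI x hx).1 hh)⟩

/-- If the joint probability matrix of `(α, β)` is a block matrix, then
`α` and `β` are not conditionally independent of any order `k`. -/
theorem not_condIndepOrder_of_isBlockMatrix {Ω : Type} [Fintype Ω] {m n : ℕ}
    (μ : Ω → ℝ) (hμ : IsProb μ) (α : Ω → Fin m) (β : Ω → Fin n)
    (M : Matrix (Fin m) (Fin n) ℝ) (hM : IsJointMatrixOf M μ α β)
    (hblock : IsBlockMatrix M) :
    ∀ k : ℕ, ¬ CondIndepOrder μ α β k := by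
  intro k
  obtain ⟨I, J, -, -, -, -, ⟨i, hi, j, hj, hij⟩, ⟨i', hi', j', hj', hij'⟩, hz⟩ := hblock
  rw [hM] at hij hij'
  refine not_aux k Ω _ _ _ μ α β (· ∈ I) (· ∈ J) hμ ?_ ?_ ?_
  · intro ω hω
    have hne : M (α ω) (β ω) ≠ 0 := by
      rw [hM]
      exact (pr_pos_aux hμ _ ω hω ⟨rfl, rfl⟩).ne'
    have := mt (hz (α ω) (β ω)) hne
    simp only [Finset.mem_compl] at this
    tauto
  · obtain ⟨ω, hω, e, -⟩ := exists_of_pr_ne_aux hμ _ hij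
    exact ⟨ω, hω, by rw [e]; exact hi⟩
  · obtain ⟨ω, hω, e, -⟩ := exists_of_pr_ne_aux hμ _ hij'
    exact ⟨ω, hω, by rw [e]; exact Finset.mem_compl.1 hi'⟩
end

section
/- Let α and β be random variables on a finite probability space that are conditionally independent of order k, and let (α₁,β₁), …, (α_n,β_n) be i.i.d. pairs of random variables, each pair having the same joint distribution as (α, β). Then the random variables αⁿ = (α₁,…,α_n) and βⁿ = (β₁,…,β_n) are conditionally independent of order k. -/
open scoped BigOperators Classical

theorem aux_pr_iid {Ω : Type} [Fintype Ω] (μ : Ω → ℝ) (n : ℕ) (E : Fin n → Ω → Prop) :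
    pr (iidMeasure μ n) (fun v => ∀ i, E i (v i)) = ∏ i, pr μ (E i) := by
  unfold pr iidMeasure
  rw [Finset.prod_univ_sum, Fintype.piFinset_univ]
  refine Finset.sum_congr rfl fun v _ => ?_
  by_cases h : ∀ i, E i (v i)
  · rw [if_pos h]
    exact Finset.prod_congr rfl fun i _ => by rw [if_pos (h i)]
  · rw [if_neg h]
    push Not at h
    obtain ⟨i, hi⟩ := h
    exact (Finset.prod_eq_zero (Finset.mem_univ i) (if_neg hi)).symm

theorem aux_sum_iid {Ω : Type} [Fintype Ω] (μ : Ω → ℝ) (hμ : ∑ ω, μ ω = 1) (n : ℕ)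
    (f : Ω → ℝ) (j : Fin n) :
    ∑ v : Fin n → Ω, (∏ i, μ (v i)) * f (v j) = ∑ ω, μ ω * f ω := by
  have h1 : ∀ v : Fin n → Ω, (∏ i, μ (v i)) * f (v j)
      = ∏ i, (μ (v i) * if i = j then f (v i) else 1) := by
    intro v
    rw [Finset.prod_mul_distrib, Finset.prod_ite_eq' Finset.univ j (fun i => f (v i))]
    simp
  simp_rw [h1]
  have h2 := Finset.prod_univ_sum (fun _ : Fin n => (Finset.univ : Finset Ω))
    (fun i ω => μ ω * if i = j then f ω else 1)
  rw [Fintype.piFinset_univ] at h2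
  rw [← h2, Finset.prod_eq_single j]
  · simp
  · intro i _ hij
    simp [hij, hμ]
  · simp

theorem aux_ent_eq {Ω A : Type} [Fintype Ω] (μ : Ω → ℝ) (α : Ω → A) :
    ent μ α = -∑ ω, μ ω * Real.logb 2 (pr μ (fun ω' => α ω' = α ω)) := by
  unfold ent
  congr 1
  rw [← Finset.sum_fiberwise_of_maps_to (s := Finset.univ) (t := Finset.univ.image α) (g := α)
    (fun ω _ => Finset.mem_image_of_mem _ (Finset.mem_univ ω))]
  refine Finset.sum_congr rfl fun a _ => ?_
  conv_lhs => rw [pr]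
  rw [← Finset.sum_filter, Finset.sum_mul]
  refine Finset.sum_congr (by ext; simp) fun ω hω => ?_
  rw [(Finset.mem_filter.1 hω).2, pr, Finset.sum_filter]

theorem aux_pr_pos {Ω : Type} [Fintype Ω] (μ : Ω → ℝ) (h0 : ∀ ω, 0 ≤ μ ω) (E : Ω → Prop)
    (ω : Ω) (hE : E ω) (hω : μ ω ≠ 0) : pr μ E ≠ 0 := by
  have h1 : 0 < μ ω := lt_of_le_of_ne (h0 ω) (Ne.symm hω)
  have h2 : (if E ω then μ ω else 0) ≤ pr μ E := by
    unfold pr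
    refine Finset.single_le_sum (f := fun ω => if E ω then μ ω else 0) (fun x _ => ?_)
      (Finset.mem_univ ω)
    show 0 ≤ if E x then μ x else 0
    split_ifs
    · exact h0 x
    · exact le_rfl
  rw [if_pos hE] at h2
  linarith

theorem aux_ent_iid {Ω A X : Type} [Fintype Ω] (μ : Ω → ℝ) (hμ : IsProb μ) (n : ℕ)
    (α : Ω → A) (R : (Fin n → Ω) → X) (hR : ∀ v w, R v = R w ↔ ∀ i, α (v i) = α (w i)) :
    ent (iidMeasure μ n) R = n * ent μ α := by
  rw [aux_ent_eq, aux_ent_eq]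
  have h1 : ∀ v : Fin n → Ω,
      iidMeasure μ n v * Real.logb 2 (pr (iidMeasure μ n) (fun w => R w = R v))
      = ∑ j, (∏ i, μ (v i)) * Real.logb 2 (pr μ (fun ω' => α ω' = α (v j))) := by
    intro v
    simp_rw [hR]
    rw [aux_pr_iid μ n (fun i ω => α ω = α (v i)), ← Finset.mul_sum]
    by_cases h : ∏ i, μ (v i) = 0
    · simp [iidMeasure, h]
    · rw [Real.logb_prod]
      · rfl
      · intro i _
        exact aux_pr_pos μ hμ.1 _ (v i) rfl (Finset.prod_ne_zero_iff.1 h i (Finset.mem_univ i))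
  rw [Finset.sum_congr rfl (fun v _ => h1 v), Finset.sum_comm,
    Finset.sum_congr rfl (fun j _ => aux_sum_iid μ hμ.2 n
      (fun x => Real.logb 2 (pr μ (fun ω' => α ω' = α x))) j)]
  simp

theorem aux_cmi_iid {Ω A B C : Type} [Fintype Ω] (μ : Ω → ℝ) (hμ : IsProb μ) (n : ℕ)
    (α : Ω → A) (β : Ω → B) (γ : Ω → C) :
    condMutualInfo (iidMeasure μ n) (iidRV α n) (iidRV β n) (iidRV γ n)
      = n * condMutualInfo μ α β γ := by
  unfold condMutualInfo condEnt
  rw [aux_ent_iid μ hμ n γ (iidRV γ n) (by intro v w; simp [iidRV, funext_iff]),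
    aux_ent_iid μ hμ n (fun ω => (α ω, γ ω)) _
      (by intro v w; simp [iidRV, funext_iff, forall_and]),
    aux_ent_iid μ hμ n (fun ω => (β ω, γ ω)) _
      (by intro v w; simp [iidRV, funext_iff, forall_and]),
    aux_ent_iid μ hμ n (fun ω => ((α ω, β ω), γ ω)) _
      (by intro v w; simp [iidRV, funext_iff, forall_and])]
  ring

theorem aux_iid_isProb {Ω : Type} [Fintype Ω] (μ : Ω → ℝ) (hμ : IsProb μ) (n : ℕ) :
    IsProb (iidMeasure μ n) := by
  refine ⟨fun v => Finset.prod_nonneg fun i _ => hμ.1 _, ?_⟩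
  have h := aux_pr_iid μ n (fun _ _ => True)
  simpa [pr, hμ.2] using h

theorem aux_marg {Ω B : Type} [Fintype Ω] (μ : Ω → ℝ) (E : Ω → Prop) (β : Ω → B)
    (S : Finset B) (hS : ∀ ω, β ω ∈ S) :
    ∑ b ∈ S, pr μ (fun ω => E ω ∧ β ω = b) = pr μ E := by
  unfold pr
  rw [Finset.sum_comm]
  refine Finset.sum_congr rfl fun ω _ => ?_
  rw [Finset.sum_eq_single (β ω)]
  · simp
  · intro b _ hb
    simp [Ne.symm hb]
  · intro h
    exact absurd (hS ω) h

theorem aux_marg_iid {Ω Ω' A B : Type} [Fintype Ω] [Fintype Ω']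
    (μ : Ω → ℝ) (α : Ω → A) (β : Ω → B) (n : ℕ)
    (μ' : Ω' → ℝ) (αv : Ω' → Fin n → A) (βv : Ω' → Fin n → B)
    (hiid : ∀ (a : Fin n → A) (b : Fin n → B),
      pr μ' (fun ω => αv ω = a ∧ βv ω = b) = ∏ i, pr μ (fun ω => α ω = a i ∧ β ω = b i))
    (a : Fin n → A) :
    pr μ' (fun ω => αv ω = a) = ∏ i, pr μ (fun ω => α ω = a i) := by
  let S : Fin n → Finset B := fun i =>
    Finset.univ.image β ∪ Finset.univ.image (fun ω => βv ω i)
  rw [← aux_marg μ' _ βv (Fintype.piFinset S)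
    (fun ω => Fintype.mem_piFinset.2 fun i => Finset.mem_union_right _
      (Finset.mem_image_of_mem (fun ω => βv ω i) (Finset.mem_univ ω)))]
  simp_rw [hiid]
  rw [← Finset.prod_univ_sum S (fun i b => pr μ (fun ω => α ω = a i ∧ β ω = b))]
  refine Finset.prod_congr rfl fun i _ => ?_
  exact aux_marg μ _ β (S i) (fun ω => Finset.mem_union_left _
      (Finset.mem_image_of_mem _ (Finset.mem_univ ω)))

theorem aux_main (k : ℕ) : ∀ {Ω Ω' A B : Type} (iΩ : Fintype Ω) (iΩ' : Fintype Ω')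
    (μ : Ω → ℝ) (α : Ω → A) (β : Ω → B)
    (_ : CondIndepOrderAux k Ω A B iΩ μ α β) (n : ℕ)
    (μ' : Ω' → ℝ) (αv : Ω' → Fin n → A) (βv : Ω' → Fin n → B)
    (_ : ∀ (a : Fin n → A) (b : Fin n → B),
      pr μ' (fun ω => αv ω = a ∧ βv ω = b) = ∏ i, pr μ (fun ω => α ω = a i ∧ β ω = b i)),
    CondIndepOrderAux k Ω' (Fin n → A) (Fin n → B) iΩ' μ' αv βv := by
  have hjoint : ∀ {Ω A B : Type} [Fintype Ω] (μ : Ω → ℝ) (α : Ω → A) (β : Ω → B) (n : ℕ)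
      (a : Fin n → A) (b : Fin n → B),
      pr (iidMeasure μ n) (fun ω => iidRV α n ω = a ∧ iidRV β n ω = b)
        = ∏ i, pr μ (fun ω => α ω = a i ∧ β ω = b i) := by
    intro Ω A B _ μ α β n a b
    rw [← aux_pr_iid μ n (fun i ω => α ω = a i ∧ β ω = b i)]
    congr 1
    funext v
    simp [iidRV, funext_iff, forall_and]
  induction k with
  | zero =>
    intro Ω Ω' A B iΩ iΩ' μ α β h n μ' αv βv hiid
    intro a b
    rw [hiid, aux_marg_iid μ α β n μ' αv βv hiid a,
      aux_marg_iid μ β α n μ' βv αv (fun b a => by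
        simpa only [and_comm] using hiid a b) b, ← Finset.prod_mul_distrib]
    exact Finset.prod_congr rfl fun i _ => h (a i) (b i)
  | succ k ih =>
    intro Ω Ω' A B iΩ iΩ' μ α β h n μ' αv βv hiid
    obtain ⟨Ω₁, A₁, B₁, i₁, μ₁, α₀, β₀, αs, βs, hP, hj, h1, h2, h3⟩ := h
    refine ⟨Fin n → Ω₁, Fin n → A₁, Fin n → B₁, inferInstance, iidMeasure μ₁ n,
      iidRV α₀ n, iidRV β₀ n, iidRV αs n, iidRV βs n, aux_iid_isProb μ₁ hP n, ?_, ?_, ?_, ?_⟩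
    · intro a b
      rw [hiid, hjoint]
      exact Finset.prod_congr rfl fun i _ => hj (a i) (b i)
    · rw [aux_cmi_iid μ₁ hP, h1, mul_zero]
    · rw [aux_cmi_iid μ₁ hP, h2, mul_zero]
    · exact ih i₁ _ μ₁ αs βs h3 n _ _ _ (hjoint μ₁ αs βs n)

/-- If `α` and `β` are conditionally independent of order `k` and
`(α₁,β₁), …, (α_n,β_n)` are i.i.d. pairs, each distributed as `(α, β)`, then
`αⁿ = (α₁,…,α_n)` and `βⁿ = (β₁,…,β_n)` are conditionally independent of order `k`. -/
theorem condIndepOrder_iid {Ω Ω' A B : Type} [Fintype Ω] [Fintype Ω']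
    (μ : Ω → ℝ) (hμ : IsProb μ) (α : Ω → A) (β : Ω → B) (k : ℕ)
    (h : CondIndepOrder μ α β k) (n : ℕ)
    (μ' : Ω' → ℝ) (hμ' : IsProb μ') (αi : Fin n → Ω' → A) (βi : Fin n → Ω' → B)
    (hiid : ∀ (a : Fin n → A) (b : Fin n → B),
      pr μ' (fun ω => (∀ i, αi i ω = a i) ∧ (∀ i, βi i ω = b i)) =
        ∏ i, pr μ (fun ω => α ω = a i ∧ β ω = b i)) :
    CondIndepOrder μ' (fun ω i => αi i ω) (fun ω i => βi i ω) k := by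
  refine aux_main k _ _ μ α β h n μ' _ _ fun a b => ?_
  rw [← hiid a b]
  simp only [funext_iff]
end

section
/- If M is a good m×n joint probability matrix, A is an m×m' stochastic matrix, and B is an n×n' stochastic matrix, then AᵀMB is a good m'×n' joint probability matrix. -/
open scoped BigOperators Classical

section Helpers

variable {Ω A B C : Type} [Fintype Ω]

lemma pr_nonneg' {μ : Ω → ℝ} (h : ∀ ω, 0 ≤ μ ω) (E : Ω → Prop) : 0 ≤ pr μ E := by
  unfold pr
  exact Finset.sum_nonneg (fun ω _ => by split_ifs <;> simp [h ω])

lemma pr_mono' {μ : Ω → ℝ} (h : ∀ ω, 0 ≤ μ ω) {E F : Ω → Prop} (hEF : ∀ ω, E ω → F ω) :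
    pr μ E ≤ pr μ F := by
  unfold pr
  refine Finset.sum_le_sum (fun ω _ => ?_)
  by_cases hE : E ω
  · simp [hE, hEF ω hE]
  · simp only [hE, if_false]
    split_ifs <;> simp [h ω]

lemma pr_congr' {μ : Ω → ℝ} {E F : Ω → Prop} (hEF : ∀ ω, E ω ↔ F ω) :
    pr μ E = pr μ F := by
  have : E = F := funext fun ω => propext (hEF ω)
  rw [this]

lemma pr_pos_of {μ : Ω → ℝ} (h : ∀ ω, 0 ≤ μ ω) {E : Ω → Prop} {ω : Ω} (hω : 0 < μ ω)
    (hE : E ω) : 0 < pr μ E := by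
  unfold pr
  refine Finset.sum_pos' (fun ω _ => by split_ifs <;> simp [h ω]) ⟨ω, Finset.mem_univ _, ?_⟩
  simpa [hE] using hω

/-- expectation of a function of a random variable -/
lemma sum_image_pr (μ : Ω → ℝ) (α : Ω → A) (f : A → ℝ) :
    ∑ a ∈ Finset.univ.image α, pr μ (fun ω => α ω = a) * f a = ∑ ω, μ ω * f (α ω) := by
  unfold pr
  simp_rw [Finset.sum_mul]
  rw [Finset.sum_comm]
  refine Finset.sum_congr rfl (fun ω _ => ?_)
  rw [Finset.sum_eq_single (α ω)]
  · simp
  · intro b _ hb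
    simp [hb.symm]
  · intro h
    simp at h

lemma sum_image_pr_and (μ : Ω → ℝ) (α : Ω → A) (E : Ω → Prop) :
    ∑ a ∈ Finset.univ.image α, pr μ (fun ω => α ω = a ∧ E ω) = pr μ E := by
  unfold pr
  rw [Finset.sum_comm]
  refine Finset.sum_congr rfl (fun ω _ => ?_)
  rw [Finset.sum_eq_single (α ω)]
  · simp
  · intro b _ hb
    simp [hb.symm]
  · intro h
    simp at h

lemma ent_eq (μ : Ω → ℝ) (α : Ω → A) :
    ent μ α = -∑ ω, μ ω * Real.logb 2 (pr μ (fun ω' => α ω' = α ω)) := by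
  unfold ent
  rw [sum_image_pr μ α (fun a => Real.logb 2 (pr μ (fun ω' => α ω' = a)))]

/-- Factorization form of conditional independence. -/
def CI (μ : Ω → ℝ) (α : Ω → A) (β : Ω → B) (γ : Ω → C) : Prop :=
  ∀ a b c, pr μ (fun ω => α ω = a ∧ β ω = b ∧ γ ω = c) * pr μ (fun ω => γ ω = c) =
    pr μ (fun ω => α ω = a ∧ γ ω = c) * pr μ (fun ω => β ω = b ∧ γ ω = c)

lemma condMutualInfo_eq (μ : Ω → ℝ) (α : Ω → A) (β : Ω → B) (γ : Ω → C) :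
    condMutualInfo μ α β γ = ∑ ω, μ ω *
      (Real.logb 2 (pr μ (fun ω' => α ω' = α ω ∧ β ω' = β ω ∧ γ ω' = γ ω))
        + Real.logb 2 (pr μ (fun ω' => γ ω' = γ ω))
        - Real.logb 2 (pr μ (fun ω' => α ω' = α ω ∧ γ ω' = γ ω))
        - Real.logb 2 (pr μ (fun ω' => β ω' = β ω ∧ γ ω' = γ ω))) := by
  unfold condMutualInfo condEnt
  simp only [ent_eq, Prod.mk.injEq, and_assoc, mul_sub, mul_add, Finset.sum_add_distrib,
    Finset.sum_sub_distrib]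
  ring

lemma condMutualInfo_eq_zero_of_CI {μ : Ω → ℝ} (h : ∀ ω, 0 ≤ μ ω)
    {α : Ω → A} {β : Ω → B} {γ : Ω → C} (hCI : CI μ α β γ) : condMutualInfo μ α β γ = 0 := by
  rw [condMutualInfo_eq]
  refine Finset.sum_eq_zero (fun ω _ => ?_)
  rcases (h ω).eq_or_lt with h0 | h0
  · simp [← h0]
  have h1 := pr_pos_of h (E := fun ω' => α ω' = α ω ∧ β ω' = β ω ∧ γ ω' = γ ω) h0 ⟨rfl, rfl, rfl⟩
  have h2 := pr_pos_of h (E := fun ω' => γ ω' = γ ω) h0 rfl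
  have h3 := pr_pos_of h (E := fun ω' => α ω' = α ω ∧ γ ω' = γ ω) h0 ⟨rfl, rfl⟩
  have h4 := pr_pos_of h (E := fun ω' => β ω' = β ω ∧ γ ω' = γ ω) h0 ⟨rfl, rfl⟩
  rw [← Real.logb_mul h1.ne' h2.ne', hCI, Real.logb_mul h3.ne' h4.ne']
  ring

lemma CI_of_condMutualInfo_eq_zero {μ : Ω → ℝ} (hμ : IsProb μ)
    {α : Ω → A} {β : Ω → B} {γ : Ω → C} (h0 : condMutualInfo μ α β γ = 0) : CI μ α β γ := by
  obtain ⟨h, hs⟩ := hμ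
  set p3 : A → B → C → ℝ := fun a b c => pr μ (fun ω => α ω = a ∧ β ω = b ∧ γ ω = c) with hp3
  set pa : A → C → ℝ := fun a c => pr μ (fun ω => α ω = a ∧ γ ω = c) with hpa
  set pb : B → C → ℝ := fun b c => pr μ (fun ω => β ω = b ∧ γ ω = c) with hpb
  set pc : C → ℝ := fun c => pr μ (fun ω => γ ω = c) with hpc
  have p3n : ∀ a b c, 0 ≤ p3 a b c := fun a b c => pr_nonneg' h _
  have pan : ∀ a c, 0 ≤ pa a c := fun a c => pr_nonneg' h _
  have pbn : ∀ b c, 0 ≤ pb b c := fun a c => pr_nonneg' h _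
  have pcn : ∀ c, 0 ≤ pc c := fun c => pr_nonneg' h _
  set x : A → B → C → ℝ := fun a b c => pa a c * pb b c / (p3 a b c * pc c) with hx
  -- pointwise bound
  set L : Ω → ℝ := fun ω => Real.logb 2 (p3 (α ω) (β ω) (γ ω)) + Real.logb 2 (pc (γ ω))
    - Real.logb 2 (pa (α ω) (γ ω)) - Real.logb 2 (pb (β ω) (γ ω)) with hL
  have hI : ∑ ω, μ ω * L ω = 0 := by rw [← h0, condMutualInfo_eq]
  have hl2 : 0 < Real.log 2 := Real.log_pos (by norm_num)
  have hLx : ∀ ω, 0 < μ ω → 0 < x (α ω) (β ω) (γ ω) ∧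
      L ω * Real.log 2 = - Real.log (x (α ω) (β ω) (γ ω)) := by
    intro ω hω
    have h1 : 0 < p3 (α ω) (β ω) (γ ω) := pr_pos_of h hω ⟨rfl, rfl, rfl⟩
    have h2 : 0 < pc (γ ω) := pr_pos_of h hω rfl
    have h3 : 0 < pa (α ω) (γ ω) := pr_pos_of h hω ⟨rfl, rfl⟩
    have h4 : 0 < pb (β ω) (γ ω) := pr_pos_of h hω ⟨rfl, rfl⟩
    refine ⟨by positivity, ?_⟩
    simp only [hx, hL]
    rw [Real.log_div (by positivity) (by positivity), Real.log_mul h3.ne' h4.ne',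
      Real.log_mul h1.ne' h2.ne']
    unfold Real.logb
    field_simp
    ring
  set SA := Finset.univ.image α
  set SB := Finset.univ.image β
  set SC := Finset.univ.image γ
  set S := SA ×ˢ SB ×ˢ SC with hS
  -- total of the product form
  have hQ : ∑ t ∈ S, pa t.1 t.2.2 * pb t.2.1 t.2.2 / pc t.2.2 = 1 := by
    rw [hS, Finset.sum_product]
    simp_rw [Finset.sum_product]
    have e1 : ∀ c, ∑ a ∈ SA, pa a c = pc c := fun c => sum_image_pr_and μ α _
    have e2 : ∀ c, ∑ b ∈ SB, pb b c = pc c := fun c => sum_image_pr_and μ β _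
    have e3 : ∑ c ∈ SC, pc c = 1 := by
      have := sum_image_pr μ γ (fun _ => 1)
      simpa [hs] using this
    calc ∑ a ∈ SA, ∑ b ∈ SB, ∑ c ∈ SC, pa a c * pb b c / pc c
        = ∑ c ∈ SC, (∑ a ∈ SA, pa a c) * (∑ b ∈ SB, pb b c) / pc c := by
          simp_rw [Finset.sum_mul_sum, Finset.sum_div]
          rw [Finset.sum_comm]
          simp_rw [Finset.sum_comm (s := SA) (t := SC)]
          rw [Finset.sum_comm]
          exact Finset.sum_congr rfl (fun c _ => Finset.sum_comm)
      _ = ∑ c ∈ SC, pc c := by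
          refine Finset.sum_congr rfl (fun c _ => ?_)
          rw [e1, e2, mul_self_div_self]
      _ = 1 := e3
  have hP : ∀ f : A → B → C → ℝ, ∑ t ∈ S, p3 t.1 t.2.1 t.2.2 * f t.1 t.2.1 t.2.2 =
      ∑ ω, μ ω * f (α ω) (β ω) (γ ω) := by
    intro f
    have := sum_image_pr μ (fun ω => (α ω, β ω, γ ω)) (fun t => f t.1 t.2.1 t.2.2)
    rw [← this]
    symm
    have e : ∀ t : A × B × C, pr μ (fun ω => (α ω, β ω, γ ω) = t) = p3 t.1 t.2.1 t.2.2 := by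
      intro t
      exact pr_congr' (fun ω => by simp [Prod.ext_iff])
    simp_rw [e]
    refine Finset.sum_subset ?_ ?_
    · intro t ht
      simp only [Finset.mem_image, Finset.mem_univ, true_and] at ht
      obtain ⟨ω, rfl⟩ := ht
      simp [hS, SA, SB, SC]
    · intro t _ ht
      have : p3 t.1 t.2.1 t.2.2 = 0 := by
        rw [← e]
        unfold pr
        refine Finset.sum_eq_zero (fun ω _ => ?_)
        rw [if_neg]
        intro hh
        simp only [Finset.mem_image, Finset.mem_univ, true_and] at ht
        exact ht ⟨ω, hh⟩
      rw [this, zero_mul]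
  -- D_t = pa*pb/pc - p3 * x ≥ 0
  have hD : ∀ t : A × B × C, 0 ≤ pa t.1 t.2.2 * pb t.2.1 t.2.2 / pc t.2.2
      - p3 t.1 t.2.1 t.2.2 * x t.1 t.2.1 t.2.2 := by
    intro t
    simp only [hx]
    rcases (p3n t.1 t.2.1 t.2.2).eq_or_lt with h1 | h1
    · rw [← h1, zero_mul, sub_zero]
      exact div_nonneg (mul_nonneg (pan _ _) (pbn _ _)) (pcn _)
    · rw [sub_nonneg]
      apply le_of_eq
      field_simp
  have hG : ∀ ω, 0 ≤ μ ω * (L ω * Real.log 2 - 1 + x (α ω) (β ω) (γ ω)) := by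
    intro ω
    rcases (h ω).eq_or_lt with h1 | h1
    · simp [← h1]
    · obtain ⟨hx0, e⟩ := hLx ω h1
      rw [e]
      have := Real.log_le_sub_one_of_pos hx0
      exact mul_nonneg h1.le (by linarith)
  have htot : ∑ t ∈ S, (pa t.1 t.2.2 * pb t.2.1 t.2.2 / pc t.2.2
      - p3 t.1 t.2.1 t.2.2 * x t.1 t.2.1 t.2.2)
      + ∑ ω, μ ω * (L ω * Real.log 2 - 1 + x (α ω) (β ω) (γ ω)) = 0 := by
    rw [Finset.sum_sub_distrib, hQ, hP]
    have : ∑ ω, μ ω * (L ω * Real.log 2 - 1 + x (α ω) (β ω) (γ ω)) =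
        (∑ ω, μ ω * L ω) * Real.log 2 - ∑ ω, μ ω + ∑ ω, μ ω * x (α ω) (β ω) (γ ω) := by
      rw [Finset.sum_mul, ← Finset.sum_sub_distrib, ← Finset.sum_add_distrib]
      exact Finset.sum_congr rfl (fun ω _ => by ring)
    rw [this, hI, hs]
    ring
  have n1 := Finset.sum_nonneg (fun t (_ : t ∈ S) => hD t)
  have n2 := Finset.sum_nonneg (fun ω (_ : ω ∈ Finset.univ) => hG ω)
  have z1 := (Finset.sum_eq_zero_iff_of_nonneg (fun t (_ : t ∈ S) => hD t)).1 (by linarith)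
  have z2 := (Finset.sum_eq_zero_iff_of_nonneg
    (fun ω (_ : ω ∈ Finset.univ) => hG ω)).1 (by linarith)
  have key : ∀ a b c, p3 a b c * pc c = pa a c * pb b c := by
    intro a b c
    rcases (p3n a b c).eq_or_lt with h1 | h1
    · rw [← h1, zero_mul]
      by_cases hm : (a, b, c) ∈ S
      · have := z1 _ hm
        simp only [← h1, zero_mul, sub_zero] at this
        rcases div_eq_zero_iff.1 this with h2 | h2
        · exact h2.symm
        · have : pa a c ≤ pc c := pr_mono' h (fun ω hω => hω.2)
          have : pa a c = 0 := le_antisymm (by linarith) (pan _ _)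
          rw [this, zero_mul]
      · have e : pa a c = 0 ∨ pb b c = 0 := by
          by_contra hcon
          push Not at hcon
          obtain ⟨ha, hb⟩ := hcon
          obtain ⟨ω1, _, hw1⟩ := Finset.exists_ne_zero_of_sum_ne_zero ha
          obtain ⟨ω2, _, hw2⟩ := Finset.exists_ne_zero_of_sum_ne_zero hb
          have g1 : α ω1 = a ∧ γ ω1 = c := by
            by_contra hh
            exact hw1 (if_neg hh)
          have g2 : β ω2 = b ∧ γ ω2 = c := by
            by_contra hh
            exact hw2 (if_neg hh)
          apply hm
          simp only [hS, Finset.mem_product, SA, SB, SC, Finset.mem_image, Finset.mem_univ,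
            true_and]
          exact ⟨⟨ω1, g1.1⟩, ⟨ω2, g2.1⟩, ⟨ω1, g1.2⟩⟩
        rcases e with e | e <;> simp [e]
    · obtain ⟨ω, _, hw⟩ := Finset.exists_ne_zero_of_sum_ne_zero h1.ne'
      have g : α ω = a ∧ β ω = b ∧ γ ω = c := by
        by_contra hh
        exact hw (if_neg hh)
      rw [if_pos g] at hw
      have hω : 0 < μ ω := lt_of_le_of_ne (h ω) (Ne.symm hw)
      obtain ⟨hx0, e⟩ := hLx ω hω
      have z := z2 ω (Finset.mem_univ _)
      rw [e] at z
      have z' := (mul_eq_zero.1 z).resolve_left hw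
      have hx1 : x (α ω) (β ω) (γ ω) = 1 := by
        by_contra hne
        have := Real.log_lt_sub_one_of_pos hx0 hne
        linarith
      rw [g.1, g.2.1, g.2.2] at hx1
      exact (eq_of_div_eq_one hx1).symm
  exact key

lemma indep_congr {Ω' : Type} [Fintype Ω'] {μ : Ω → ℝ} {μ' : Ω' → ℝ} {α : Ω → A} {β : Ω → B}
    {α' : Ω' → A} {β' : Ω' → B}
    (h : ∀ E : A → B → Prop, pr μ' (fun ω => E (α' ω) (β' ω)) = pr μ (fun ω => E (α ω) (β ω)))
    (hi : Indep μ α β) : Indep μ' α' β' := by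
  intro a b
  rw [h (fun x y => x = a ∧ y = b), h (fun x _ => x = a), h (fun _ y => y = b)]
  exact hi a b

lemma condIndepOrderAux_congr {Ω' : Type} [i' : Fintype Ω'] {μ : Ω → ℝ} {μ' : Ω' → ℝ}
    {α : Ω → A} {β : Ω → B} {α' : Ω' → A} {β' : Ω' → B}
    (h : ∀ E : A → B → Prop, pr μ' (fun ω => E (α' ω) (β' ω)) = pr μ (fun ω => E (α ω) (β ω)))
    (k : ℕ) (hi : CondIndepOrderAux k Ω A B ‹_› μ α β) :
    CondIndepOrderAux k Ω' A B i' μ' α' β' := by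
  cases k with
  | zero => exact indep_congr h hi
  | succ k =>
    obtain ⟨Ω₁, A₁, B₁, i₁, μ₁, α₁, β₁, αs, βs, h1, h2, h3⟩ := hi
    exact ⟨Ω₁, A₁, B₁, i₁, μ₁, α₁, β₁, αs, βs, h1,
      fun a b => (h2 a b).trans (h (fun x y => x = a ∧ y = b)).symm, h3⟩

/-- The extended measure: independently resample through the channels `P`, `Q`. -/
def ext {m n m' n' : ℕ} (P : Matrix (Fin m) (Fin m') ℝ) (Q : Matrix (Fin n) (Fin n') ℝ)
    (μ : Ω → ℝ) (α : Ω → Fin m) (β : Ω → Fin n) : Ω × Fin m' × Fin n' → ℝ :=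
  fun t => μ t.1 * P (α t.1) t.2.1 * Q (β t.1) t.2.2

variable {m n m' n' : ℕ} {P : Matrix (Fin m) (Fin m') ℝ} {Q : Matrix (Fin n) (Fin n') ℝ}
  {μ : Ω → ℝ} {α : Ω → Fin m} {β : Ω → Fin n}

lemma pr_ext (E : Ω → Fin m' → Fin n' → Prop) :
    pr (ext P Q μ α β) (fun t => E t.1 t.2.1 t.2.2) =
      ∑ ω, ∑ i, ∑ j, if E ω i j then μ ω * P (α ω) i * Q (β ω) j else 0 := by
  unfold pr ext
  rw [Fintype.sum_prod_type]
  simp_rw [Fintype.sum_prod_type]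

lemma pr_ext_base (hP : IsStochastic P) (hQ : IsStochastic Q) (E : Ω → Prop) :
    pr (ext P Q μ α β) (fun t => E t.1) = pr μ E := by
  rw [pr_ext (fun ω _ _ => E ω)]
  refine Finset.sum_congr rfl (fun ω _ => ?_)
  split_ifs
  · simp_rw [← Finset.mul_sum, hQ.2, mul_one, ← Finset.mul_sum, hP.2, mul_one]
  · simp

lemma pr_ext_left (hQ : IsStochastic Q) (i : Fin m') (E : Ω → Prop) :
    pr (ext P Q μ α β) (fun t => t.2.1 = i ∧ E t.1) =
      ∑ a, P a i * pr μ (fun ω => α ω = a ∧ E ω) := by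
  rw [pr_ext (fun ω i' _ => i' = i ∧ E ω)]
  unfold pr
  simp_rw [Finset.mul_sum]
  rw [Finset.sum_comm (γ := Fin m)]
  refine Finset.sum_congr rfl (fun ω _ => ?_)
  by_cases hE : E ω
  · simp only [hE, and_true]
    rw [Finset.sum_comm]
    simp only [Finset.sum_ite_eq', Finset.mem_univ, if_true]
    rw [← Finset.mul_sum, hQ.2]
    simp [mul_comm]
  · simp [hE]

lemma pr_ext_right (hP : IsStochastic P) (j : Fin n') (E : Ω → Prop) :
    pr (ext P Q μ α β) (fun t => t.2.2 = j ∧ E t.1) =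
      ∑ b, Q b j * pr μ (fun ω => β ω = b ∧ E ω) := by
  rw [pr_ext (fun ω _ j' => j' = j ∧ E ω)]
  unfold pr
  simp_rw [Finset.mul_sum]
  rw [Finset.sum_comm (γ := Fin n)]
  refine Finset.sum_congr rfl (fun ω _ => ?_)
  by_cases hE : E ω
  · simp [hE, ← Finset.mul_sum, hP.2, mul_comm]
  · simp [hE]

lemma sum_sum_single {p q : ℕ} (i : Fin p) (j : Fin q) {f : Fin p → Fin q → ℝ}
    (h : ∀ a b, ¬(a = i ∧ b = j) → f a b = 0) : ∑ a, ∑ b, f a b = f i j := by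
  rw [Finset.sum_eq_single i, Finset.sum_eq_single j]
  · intro b _ hb
    exact h _ _ (fun hh => hb hh.2)
  · simp
  · intro a _ ha
    exact Finset.sum_eq_zero (fun b _ => h _ _ (fun hh => ha hh.1))
  · simp

lemma pr_ext_both (i : Fin m') (j : Fin n') (E : Ω → Prop) :
    pr (ext P Q μ α β) (fun t => t.2.1 = i ∧ t.2.2 = j ∧ E t.1) =
      ∑ a, ∑ b, P a i * Q b j * pr μ (fun ω => α ω = a ∧ β ω = b ∧ E ω) := by
  rw [pr_ext (fun ω i' j' => i' = i ∧ j' = j ∧ E ω)]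
  unfold pr
  simp_rw [Finset.mul_sum]
  simp_rw [Finset.sum_comm (s := (Finset.univ : Finset (Fin n))) (t := (Finset.univ : Finset Ω))]
  rw [Finset.sum_comm (s := (Finset.univ : Finset (Fin m))) (t := (Finset.univ : Finset Ω))]
  refine Finset.sum_congr rfl (fun ω _ => ?_)
  by_cases hE : E ω
  · simp only [hE, and_true]
    rw [sum_sum_single i j, sum_sum_single (α ω) (β ω)]
    · simp
      ring
    · intro a b hab
      rw [if_neg (fun hh => hab ⟨hh.1.symm, hh.2.symm⟩), mul_zero]
    · intro a b hab
      rw [if_neg hab]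
  · simp [hE]

lemma ext_isProb (hP : IsStochastic P) (hQ : IsStochastic Q) (hμ : IsProb μ) :
    IsProb (ext P Q μ α β) := by
  refine ⟨fun t => mul_nonneg (mul_nonneg (hμ.1 _) (hP.1 _ _)) (hQ.1 _ _), ?_⟩
  have := pr_ext_base (α := α) (β := β) (μ := μ) hP hQ (fun _ => True)
  simpa [pr, hμ.2] using this

lemma CI_ext (hP : IsStochastic P) (hQ : IsStochastic Q) {γ : Ω → C} (h : CI μ α β γ) :
    CI (ext P Q μ α β) (fun t => t.2.1) (fun t => t.2.2) (fun t => γ t.1) := by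
  intro i j c
  rw [pr_ext_both i j (fun ω => γ ω = c), pr_ext_base hP hQ (fun ω => γ ω = c),
    pr_ext_left hQ i (fun ω => γ ω = c), pr_ext_right hP j (fun ω => γ ω = c),
    Finset.sum_mul_sum, Finset.sum_mul]
  refine Finset.sum_congr rfl (fun a _ => ?_)
  rw [Finset.sum_mul]
  refine Finset.sum_congr rfl (fun b _ => ?_)
  rw [mul_assoc, h a b c]
  ring

lemma joint_ext (i : Fin m') (j : Fin n') :
    pr (ext P Q μ α β) (fun t => t.2.1 = i ∧ t.2.2 = j) =
      ∑ a, ∑ b, P a i * Q b j * pr μ (fun ω => α ω = a ∧ β ω = b) := by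
  have := pr_ext_both (P := P) (Q := Q) (μ := μ) (α := α) (β := β) i j (fun _ => True)
  simpa only [and_true] using this

lemma indep_ext (hP : IsStochastic P) (hQ : IsStochastic Q) (h : Indep μ α β) :
    Indep (ext P Q μ α β) (fun t => t.2.1) (fun t => t.2.2) := by
  intro i j
  have e1 := pr_ext_left (P := P) (Q := Q) (μ := μ) (α := α) (β := β) hQ i (fun _ => True)
  have e2 := pr_ext_right (P := P) (Q := Q) (μ := μ) (α := α) (β := β) hP j (fun _ => True)
  simp only [and_true] at e1 e2
  rw [joint_ext, e1, e2, Finset.sum_mul_sum]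
  refine Finset.sum_congr rfl (fun a _ => Finset.sum_congr rfl (fun b _ => ?_))
  rw [h a b]
  ring

lemma condIndepOrderAux_ext (hP : IsStochastic P) (hQ : IsStochastic Q) (k : ℕ)
    (h : CondIndepOrderAux k Ω (Fin m) (Fin n) ‹_› μ α β) :
    CondIndepOrderAux k (Ω × Fin m' × Fin n') (Fin m') (Fin n') inferInstance (ext P Q μ α β)
      (fun t => t.2.1) (fun t => t.2.2) := by
  cases k with
  | zero => exact indep_ext hP hQ h
  | succ k =>
    obtain ⟨Ω₁, A₁, B₁, i₁, μ₁, α₁, β₁, αs, βs, h1, h2, h3, h4, h5⟩ := h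
    refine ⟨Ω₁ × Fin m' × Fin n', A₁, B₁, inferInstance, ext P Q μ₁ α₁ β₁,
      (fun t => t.2.1), (fun t => t.2.2), fun t => αs t.1, fun t => βs t.1,
      ext_isProb hP hQ h1, ?_, ?_, ?_, ?_⟩
    · intro i j
      rw [joint_ext, joint_ext]
      simp_rw [h2]
    · exact condMutualInfo_eq_zero_of_CI (ext_isProb hP hQ h1).1
        (CI_ext hP hQ (CI_of_condMutualInfo_eq_zero h1 h3))
    · exact condMutualInfo_eq_zero_of_CI (ext_isProb hP hQ h1).1
        (CI_ext hP hQ (CI_of_condMutualInfo_eq_zero h1 h4))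
    · exact condIndepOrderAux_congr
        (fun E => pr_ext_base hP hQ (fun ω => E (αs ω) (βs ω))) k h5

end Helpers

/-- If `M` is a good `m × n` joint probability matrix, `A` is an
`m × m'` stochastic matrix and `B` is an `n × n'` stochastic matrix, then `A.transposeMB`
is a good `m' × n'` joint probability matrix. -/
theorem isGoodMatrix_transpose_mul_mul {m n m' n' : ℕ}
    (M : Matrix (Fin m) (Fin n) ℝ) (hM : IsGoodMatrix M)
    (A : Matrix (Fin m) (Fin m') ℝ) (hA : IsStochastic A)
    (B : Matrix (Fin n) (Fin n') ℝ) (hB : IsStochastic B) :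
    IsJointProbMatrix (A.transpose * M * B) ∧ IsGoodMatrix (A.transpose * M * B) := by
  obtain ⟨Ω, iΩ, μ, α, β, k, hμ, hJ, hk⟩ := hM
  have hJ' : IsJointMatrixOf (A.transpose * M * B) (ext A B μ α β)
      (fun t => t.2.1) (fun t => t.2.2) := by
    intro i j
    rw [joint_ext]
    simp only [Matrix.mul_apply, Matrix.transpose_apply, Finset.sum_mul]
    rw [Finset.sum_comm]
    refine Finset.sum_congr rfl (fun a _ => Finset.sum_congr rfl (fun b _ => ?_))
    rw [hJ a b]
    ring
  have hp := ext_isProb (α := α) (β := β) hA hB hμ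
  refine ⟨⟨fun i j => ?_, ?_⟩, _, inferInstance, ext A B μ α β, (fun t => t.2.1),
    (fun t => t.2.2), k, hp, hJ', condIndepOrderAux_ext hA hB k hk⟩
  · rw [hJ' i j]
    exact pr_nonneg' hp.1 _
  · have e : ∑ i, ∑ j, (A.transpose * M * B) i j =
        ∑ i, ∑ j, pr (ext A B μ α β) (fun t => t.2.1 = i ∧ t.2.2 = j) :=
      Finset.sum_congr rfl (fun i _ => Finset.sum_congr rfl (fun j _ => hJ' i j))
    rw [e, ← hp.2]
    unfold pr
    rw [← Fintype.sum_prod_type', Finset.sum_comm]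
    refine Finset.sum_congr rfl (fun t _ => ?_)
    rw [Fintype.sum_prod_type]
    rw [sum_sum_single t.2.1 t.2.2]
    · simp
    · intro a b hab
      exact if_neg (fun hh => hab ⟨hh.1.symm, hh.2.symm⟩)
end
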